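/- Assume S ∈ sp(n,ℂ) satisfies S² = 0 and Re Q_S ≥ 0. Then one can select a symplectic basis X_1,…,X_n,Y_1,…,Y_n of ℝ^{2n} such that L_S = Σ_{j,k=1}^m b_{jk} Y_j Y_k for some m ≤ n and complex coefficients b_{jk}; equivalently, there exists a real symplectic matrix T ∈ Sp(n,ℝ) such that the symmetric matrix ᵗT A T (where S = −AJ) has nonzero entries only in the m×m block corresponding to the coordinates Y_1,…,Y_m. -/

import Mathlib

open MeasureTheory Complex Matrix

noncomputable section

/-- Index type for `2n`-dimensional (symplectic) vectors: `X`-coordinates `inl j`,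
`Y`-coordinates `inr j`. -/
abbrev Idx (n : ℕ) := Fin n ⊕ Fin n

/-- The standard symplectic matrix `J = [[0, I],[-I, 0]]` over `ℂ`. -/
def Jmat (n : ℕ) : Matrix (Idx n) (Idx n) ℂ := Matrix.fromBlocks 0 1 (-1) 0

/-- The standard symplectic matrix `J = [[0, I],[-I, 0]]` over `ℝ`. -/
def JmatR (n : ℕ) : Matrix (Idx n) (Idx n) ℝ := Matrix.fromBlocks 0 1 (-1) 0

/-- The standard symplectic form `σ(z,w) = ᵗz J w` on `ℂ^{2n}`. -/
def sigmaC (n : ℕ) (z w : Idx n → ℂ) : ℂ := z ⬝ᵥ (Jmat n).mulVec w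

/-- The standard symplectic form on `ℝ^{2n}`. -/
def sigmaR (n : ℕ) (v w : Idx n → ℝ) : ℝ := v ⬝ᵥ (JmatR n).mulVec w

/-- Inclusion of real vectors into `ℂ^{2n}`. -/
def realVec (n : ℕ) (v : Idx n → ℝ) : Idx n → ℂ := fun i => (v i : ℂ)

/-- Complex conjugation on `ℂ^{2n}` relative to the real form `ℝ^{2n}`. -/
def conjVec (n : ℕ) (z : Idx n → ℂ) : Idx n → ℂ := fun i => (starRingEnd ℂ) (z i)

/-- `S ∈ sp(n, ℂ)`, i.e. `σ(Sz, w) + σ(z, Sw) = 0` for all `z, w`. -/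
def InSp (n : ℕ) (S : Matrix (Idx n) (Idx n) ℂ) : Prop := Sᵀ * Jmat n + Jmat n * S = 0

/-- `Re Q_S ≥ 0`: the real part of the quadratic form `Q_S(v) = σ(v, Sv)` is
positive semi-definite on `ℝ^{2n}`. -/
def RePosQ (n : ℕ) (S : Matrix (Idx n) (Idx n) ℂ) : Prop :=
  ∀ v : Idx n → ℝ, 0 ≤ (sigmaC n (realVec n v) (S.mulVec (realVec n v))).re

/-- The generalized eigenspace `V_μ` of the matrix `S` for the eigenvalue `μ`. -/
def genEig (n : ℕ) (S : Matrix (Idx n) (Idx n) ℂ) (μ : ℂ) : Submodule ℂ (Idx n → ℂ) :=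
  Module.End.maxGenEigenspace (Matrix.mulVecLin S) μ

/-- `V_r`: the sum of the generalized eigenspaces of `S` for real eigenvalues. -/
def Vreal (n : ℕ) (S : Matrix (Idx n) (Idx n) ℂ) : Submodule ℂ (Idx n → ℂ) :=
  ⨆ lam : ℝ, genEig n S (lam : ℂ)

/-- `V_i`: the sum of the generalized eigenspaces of `S` for non-real eigenvalues. -/
def Vimag (n : ℕ) (S : Matrix (Idx n) (Idx n) ℂ) : Submodule ℂ (Idx n → ℂ) :=
  ⨆ μ : {z : ℂ // z.im ≠ 0}, genEig n S (μ : ℂ)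

/-- `Sr` is the "real part" `S_r` of `S`: it agrees with `S` on `V_r` and vanishes on `V_i`. -/
def IsRealPart (n : ℕ) (S Sr : Matrix (Idx n) (Idx n) ℂ) : Prop :=
  (∀ v ∈ Vreal n S, Sr.mulVec v = S.mulVec v) ∧ ∀ v ∈ Vimag n S, Sr.mulVec v = 0

/-- `Si` is the "imaginary part" `S_i` of `S`: it vanishes on `V_r` and agrees with `S`
on `V_i`. -/
def IsImagPart (n : ℕ) (S Si : Matrix (Idx n) (Idx n) ℂ) : Prop :=
  (∀ v ∈ Vreal n S, Si.mulVec v = 0) ∧ ∀ v ∈ Vimag n S, Si.mulVec v = S.mulVec v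

/-- Condition (R): `V_λ ⊕ V_{−λ}` is invariant under complex conjugation for every
real `λ ≠ 0`. -/
def CondR (n : ℕ) (S : Matrix (Idx n) (Idx n) ℂ) : Prop :=
  ∀ lam : ℝ, lam ≠ 0 →
    ∀ z ∈ genEig n S (lam : ℂ) ⊔ genEig n S (-(lam : ℂ)),
      conjVec n z ∈ genEig n S (lam : ℂ) ⊔ genEig n S (-(lam : ℂ))

/-- `ν = Σ_j ν_j`: the sum of the imaginary parts of the eigenvalues of `S` lying in the
upper half plane, counted with multiplicity. -/
def nuTotal (n : ℕ) (S : Matrix (Idx n) (Idx n) ℂ) : ℝ :=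
  (S.charpoly.roots.map (fun z => max z.im 0)).sum

/-- `S_i ≠ 0`, i.e. `S` has at least one non-real eigenvalue. -/
def HasNonrealEig (n : ℕ) (S : Matrix (Idx n) (Idx n) ℂ) : Prop :=
  ∃ z ∈ S.charpoly.roots, z.im ≠ 0

/-- Semisimple (= diagonalizable over `ℂ`) matrix. -/
def IsSemisimpleMat (n : ℕ) (D : Matrix (Idx n) (Idx n) ℂ) : Prop :=
  ∃ (P : Matrix (Idx n) (Idx n) ℂ) (d : Idx n → ℂ), IsUnit P ∧ D = P * Matrix.diagonal d * P⁻¹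

/-- `S = D + N` is the Jordan decomposition of `S`: `D` semisimple, `N` nilpotent,
`DN = ND`. -/
def IsJordanDecomp (n : ℕ) (S D N : Matrix (Idx n) (Idx n) ℂ) : Prop :=
  S = D + N ∧ IsSemisimpleMat n D ∧ IsNilpotent N ∧ D * N = N * D

/-! Since `S² = 0` means `A J A = 0`, the columns of `J A` lie in the kernel of `A`. Positivity of
`Re A` together with symmetry of `A` makes this kernel invariant under conjugation
(`ker A = ker Aᴴ`), so the real subspace `W = J (Re (A ℂ²ⁿ))` is isotropic. Extend `W` to a
Lagrangian subspace `L`; being skew-orthogonal to `W`, it is annihilated by `A`. An orthonormal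
basis `X` of `L`, completed by `Y = J X`, is a symplectic basis because `J` is orthogonal, and
`A X = 0` leaves only the `Y`-block of `A`. -/

section Lagrangian

variable {R M : Type*} [CommRing R] [AddCommGroup M] [Module R M]

/-- Isotropic subspaces for a bilinear form: those on which the form vanishes identically. -/
def IsIsotropic (B : LinearMap.BilinForm R M) (W : Submodule R M) : Prop :=
  W ≤ B.orthogonal W

/-- Lagrangian subspaces for a bilinear form: those equal to their own orthogonal. -/
def IsLagrangian (B : LinearMap.BilinForm R M) (L : Submodule R M) : Prop :=
  B.orthogonal L = L

variable {B : LinearMap.BilinForm R M}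

lemma IsIsotropic.sup_span_singleton (hB : B.IsAlt) {W : Submodule R M} (hW : IsIsotropic B W)
    {v : M} (hv : v ∈ B.orthogonal W) : IsIsotropic B (W ⊔ R ∙ v) := by
  have hWv : ∀ w ∈ W, B w v = 0 := hv
  have hvW : ∀ w ∈ W, B v w = 0 := fun w hw => hB.isRefl w v (hWv w hw)
  have hWW : ∀ w ∈ W, ∀ w' ∈ W, B w w' = 0 := fun w hw w' hw' => hW hw' w hw
  intro y hy x hx
  obtain ⟨a, ha, _, hs, rfl⟩ := Submodule.mem_sup.1 hx
  obtain ⟨b, hb, _, ht, rfl⟩ := Submodule.mem_sup.1 hy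
  obtain ⟨s, rfl⟩ := Submodule.mem_span_singleton.1 hs
  obtain ⟨t, rfl⟩ := Submodule.mem_span_singleton.1 ht
  simp [hWW a ha b hb, hWv a ha, hvW b hb, hB v]

lemma IsIsotropic.exists_isLagrangian_ge [IsNoetherian R M] (hB : B.IsAlt) {W : Submodule R M}
    (hW : IsIsotropic B W) : ∃ L, W ≤ L ∧ IsLagrangian B L := by
  obtain ⟨L, hWL, hL⟩ := exists_maximal_ge_of_wellFoundedGT (IsIsotropic B) W hW
  refine ⟨L, hWL, le_antisymm (fun v hv => ?_) hL.prop⟩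
  have hle : L ⊔ R ∙ v ≤ L := hL.le_of_ge (hL.prop.sup_span_singleton hB hv) le_sup_left
  exact hle (Submodule.mem_sup_right (Submodule.mem_span_singleton_self v))

lemma IsLagrangian.two_mul_finrank {K V : Type*} [Field K] [AddCommGroup V] [Module K V]
    [FiniteDimensional K V] {B : LinearMap.BilinForm K V} (hB : B.Nondegenerate)
    {L : Submodule K V} (hL : IsLagrangian B L) :
    2 * Module.finrank K L = Module.finrank K V := by
  have horth := LinearMap.BilinForm.finrank_orthogonal hB L
  have hle := Submodule.finrank_le L
  rw [hL] at horth
  lia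

end Lagrangian

section Accretive

open scoped ComplexOrder

variable {ι 𝕜 : Type*} [Fintype ι] [RCLike 𝕜]

lemma star_dotProduct_conjTranspose_mulVec (A : Matrix ι ι 𝕜) (z : ι → 𝕜) :
    star z ⬝ᵥ Aᴴ *ᵥ z = star (star z ⬝ᵥ A *ᵥ z) := by
  rw [dotProduct_mulVec, ← star_mulVec, star_dotProduct]

lemma conjTranspose_mulVec_eq_zero {A : Matrix ι ι 𝕜} (hA : (A + Aᴴ).PosSemidef) {z : ι → 𝕜}
    (hz : A *ᵥ z = 0) : Aᴴ *ᵥ z = 0 := by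
  have hform : star z ⬝ᵥ (A + Aᴴ) *ᵥ z = 0 := by
    simp [add_mulVec, star_dotProduct_conjTranspose_mulVec, hz]
  simpa [add_mulVec, hz] using (hA.dotProduct_mulVec_zero_iff z).1 hform

lemma star_dotProduct_mulVec_of_isSymm {A : Matrix ι ι ℂ} (hA : A.IsSymm) (z : ι → ℂ) :
    star z ⬝ᵥ A *ᵥ z = (ofReal ∘ re ∘ z) ⬝ᵥ A *ᵥ (ofReal ∘ re ∘ z) +
      (ofReal ∘ im ∘ z) ⬝ᵥ A *ᵥ (ofReal ∘ im ∘ z) := by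
  set x : ι → ℂ := ofReal ∘ re ∘ z
  set y : ι → ℂ := ofReal ∘ im ∘ z
  have hz : z = x + I • y := by ext i; simp [x, y, mul_comm I, re_add_im]
  have hz_star : star z = x - I • y := by ext i; apply Complex.ext <;> simp [x, y]
  have hxy : x ⬝ᵥ A *ᵥ y = y ⬝ᵥ A *ᵥ x := by
    rw [dotProduct_comm, ← vecMul_transpose, hA.eq, dotProduct_mulVec]
  rw [hz_star, hz]
  simp only [mulVec_add, mulVec_smul, dotProduct_add, sub_dotProduct, smul_dotProduct,
    dotProduct_smul, smul_eq_mul, hxy]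
  linear_combination -(y ⬝ᵥ A *ᵥ y) * I_sq

lemma posSemidef_add_conjTranspose_of_isSymm {A : Matrix ι ι ℂ} (hA : A.IsSymm)
    (hpos : ∀ v : ι → ℝ, 0 ≤ ((ofReal ∘ v) ⬝ᵥ A *ᵥ (ofReal ∘ v)).re) :
    (A + Aᴴ).PosSemidef := by
  refine .of_dotProduct_mulVec_nonneg (isHermitian_add_transpose_self A) fun z => ?_
  have hre : 0 ≤ (star z ⬝ᵥ A *ᵥ z).re := by
    rw [star_dotProduct_mulVec_of_isSymm hA, add_re]
    exact add_nonneg (hpos _) (hpos _)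
  rw [add_mulVec, dotProduct_add, star_dotProduct_conjTranspose_mulVec, star_def, add_conj]
  exact_mod_cast mul_nonneg zero_le_two hre

end Accretive

section RealPart

open scoped ComplexOrder

variable {ι : Type*} [Fintype ι]

lemma re_ofReal_comp_dotProduct (x : ι → ℝ) (z : ι → ℂ) :
    ((ofReal ∘ x) ⬝ᵥ z).re = x ⬝ᵥ (re ∘ z) := by
  simp [dotProduct]

lemma re_comp_map_ofReal_mulVec {κ : Type*} (M : Matrix κ ι ℝ) (z : ι → ℂ) :
    re ∘ (M.map ofReal *ᵥ z) = M *ᵥ (re ∘ z) := by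
  ext i
  exact re_ofReal_comp_dotProduct (M i) z

lemma map_ofReal_mulVec {κ : Type*} (M : Matrix κ ι ℝ) (v : ι → ℝ) :
    M.map ofReal *ᵥ (ofReal ∘ v) = ofReal ∘ (M *ᵥ v) :=
  funext fun i => (RingHom.map_mulVec ofRealHom M v i).symm

/-- The real-linear map `z ↦ Re (A z)`. -/
def reMulVecLin (A : Matrix ι ι ℂ) : (ι → ℂ) →ₗ[ℝ] (ι → ℝ) :=
  reLm.compLeft ι ∘ₗ A.mulVecLin.restrictScalars ℝ

lemma reMulVecLin_apply (A : Matrix ι ι ℂ) (z : ι → ℂ) : reMulVecLin A z = re ∘ (A *ᵥ z) :=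
  rfl

lemma dotProduct_reMulVecLin {A : Matrix ι ι ℂ} (hA : A.IsSymm) (v : ι → ℝ) (z : ι → ℂ) :
    v ⬝ᵥ reMulVecLin A z = ((A *ᵥ (ofReal ∘ v)) ⬝ᵥ z).re := by
  rw [reMulVecLin_apply, ← re_ofReal_comp_dotProduct, dotProduct_mulVec, ← mulVec_transpose, hA.eq]

lemma mulVec_ofReal_eq_zero_of_dotProduct_reMulVecLin {A : Matrix ι ι ℂ} (hA : A.IsSymm) {v : ι → ℝ}
    (hv : ∀ z, v ⬝ᵥ reMulVecLin A z = 0) : A *ᵥ (ofReal ∘ v) = 0 := by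
  set u := A *ᵥ (ofReal ∘ v)
  have hre : (u ⬝ᵥ star u).re = 0 := dotProduct_reMulVecLin hA v (star u) ▸ hv _
  have him : (u ⬝ᵥ star u).im = 0 := (nonneg_iff.1 (dotProduct_self_star_nonneg u)).2.symm
  exact dotProduct_self_star_eq_zero.1 (Complex.ext hre him)

lemma mulVec_ofReal_re_eq_zero {A : Matrix ι ι ℂ} (hA : A.IsSymm) (hacc : (A + Aᴴ).PosSemidef)
    {z : ι → ℂ} (hz : A *ᵥ z = 0) : A *ᵥ (ofReal ∘ re ∘ z) = 0 := by
  have hre : (ofReal ∘ re ∘ z : ι → ℂ) = (2⁻¹ : ℂ) • (z + star z) := by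
    ext i
    simp [re_eq_add_conj, div_eq_inv_mul]
  have hz_star : A *ᵥ star z = 0 := by
    rw [← hA.eq, mulVec_transpose, ← conjTranspose_conjTranspose A, ← star_mulVec,
      conjTranspose_mulVec_eq_zero hacc hz, star_zero]
  rw [hre, mulVec_smul, mulVec_add, hz, hz_star, add_zero, smul_zero]

lemma reMulVecLin_dotProduct_mulVec_reMulVecLin {A : Matrix ι ι ℂ} (hA : A.IsSymm)
    (hacc : (A + Aᴴ).PosSemidef) {M : Matrix ι ι ℝ} (hAMA : A * M.map ofReal * A = 0)
    (z w : ι → ℂ) :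
    reMulVecLin A z ⬝ᵥ M *ᵥ reMulVecLin A w = 0 := by
  have hker : A *ᵥ (M.map ofReal *ᵥ (A *ᵥ w)) = 0 := by simp [← mul_assoc, hAMA]
  rw [dotProduct_comm, reMulVecLin_apply A w, ← re_comp_map_ofReal_mulVec,
    dotProduct_reMulVecLin hA, mulVec_ofReal_re_eq_zero hA hacc hker, zero_dotProduct, zero_re]

end RealPart

section Symplectic

lemma exists_transpose_mul_self_eq_one {ι κ : Type*} [Fintype ι] [Fintype κ] [DecidableEq κ]
    {L : Submodule ℝ (ι → ℝ)} (hL : Module.finrank ℝ L = Fintype.card κ) :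
    ∃ X : Matrix ι κ ℝ, Xᵀ * X = 1 ∧ ∀ k, X.col k ∈ L := by
  let e := (WithLp.linearEquiv 2 ℝ (ι → ℝ)).symm
  have hcard : Fintype.card (Fin (Module.finrank ℝ (L.map e.toLinearMap))) = Fintype.card κ := by
    rw [Fintype.card_fin, e.finrank_map_eq, hL]
  let b := (stdOrthonormalBasis ℝ (L.map e.toLinearMap)).reindex (Fintype.equivOfCardEq hcard)
  refine ⟨of fun i k => (b k : EuclideanSpace ℝ ι) i, ?_, fun k => ?_⟩
  · ext j k
    simpa [mul_apply, one_apply, PiLp.inner_apply, mul_comm] using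
      orthonormal_iff_ite.1 b.orthonormal j k
  · obtain ⟨x, hx, hxb⟩ := (b k).2
    have hcol : (of fun i k => (b k : EuclideanSpace ℝ ι) i).col k = x := by
      ext i
      simp [← hxb, e]
    exact hcol ▸ hx

lemma transpose_fromCols_mul_mul_fromCols {ι κ κ' R : Type*} [Fintype ι] [CommSemiring R]
    {A : Matrix ι ι R} (hA : A.IsSymm) {X : Matrix ι κ R} (hAX : A * X = 0) (Y : Matrix ι κ' R) :
    (fromCols X Y)ᵀ * A * fromCols X Y = fromBlocks 0 0 0 (Yᵀ * A * Y) := by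
  have hXA : Xᵀ * A = 0 := by rw [← hA.eq, ← transpose_mul, hAX, transpose_zero]
  rw [transpose_fromCols, fromRows_mul, hXA, fromRows_mul_fromCols, Matrix.mul_assoc, hAX]
  simp

variable {l R : Type*} [Fintype l] [DecidableEq l] [CommRing R]

lemma transpose_fromCols_mul_J_mul_fromCols {X : Matrix (l ⊕ l) l R}
    (horth : Xᵀ * X = 1) (hiso : Xᵀ * J l R * X = 0) :
    (fromCols X (J l R * X))ᵀ * J l R * fromCols X (J l R * X) = J l R := by
  have hJJ (Y : Matrix (l ⊕ l) l R) : J l R * (J l R * Y) = -Y := by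
    rw [← Matrix.mul_assoc, J_squared, Matrix.neg_mul, Matrix.one_mul]
  rw [Matrix.mul_assoc] at hiso
  rw [transpose_fromCols, Matrix.mul_assoc, mul_fromCols, fromRows_mul_fromCols, transpose_mul,
    J_transpose]
  simp only [Matrix.mul_assoc, hJJ, Matrix.neg_mul, Matrix.mul_neg, neg_neg, neg_zero, horth, hiso]
  rfl

lemma J_mulVec_J_mulVec (v : l ⊕ l → R) : J l R *ᵥ (J l R *ᵥ v) = -v := by
  rw [mulVec_mulVec, J_squared, neg_mulVec, one_mulVec]

lemma J_mulVec_dotProduct (v w : l ⊕ l → R) : (J l R *ᵥ v) ⬝ᵥ w = -(v ⬝ᵥ J l R *ᵥ w) := by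
  rw [dotProduct_mulVec, ← mulVec_transpose, J_transpose, neg_mulVec, neg_dotProduct, neg_neg]

lemma J_mulVec_dotProduct_J_mulVec (v w : l ⊕ l → R) :
    (J l R *ᵥ v) ⬝ᵥ (J l R *ᵥ w) = v ⬝ᵥ w := by
  rw [J_mulVec_dotProduct, J_mulVec_J_mulVec, dotProduct_neg, neg_neg]

lemma isAlt_toBilin'_J : (J l R).toBilin'.IsAlt := by
  intro v
  obtain ⟨x, y, rfl⟩ : ∃ x y, v = Sum.elim x y := ⟨_, _, (Sum.elim_comp_inl_inr v).symm⟩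
  simp [toBilin'_apply', J, fromBlocks_mulVec, neg_mulVec, dotProduct_comm y]

lemma nondegenerate_toBilin'_J [IsDomain R] : (J l R).toBilin'.Nondegenerate :=
  LinearMap.BilinForm.nondegenerate_toBilin'_of_det_ne_zero' _ (isUnit_det_J l R).ne_zero

lemma IsLagrangian.exists_orthonormal_columns {L : Submodule ℝ (l ⊕ l → ℝ)}
    (hL : IsLagrangian (J l ℝ).toBilin' L) :
    ∃ X : Matrix (l ⊕ l) l ℝ, Xᵀ * X = 1 ∧ Xᵀ * J l ℝ * X = 0 ∧ ∀ k, X.col k ∈ L := by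
  have hrank : Module.finrank ℝ L = Fintype.card l := by
    have := hL.two_mul_finrank nondegenerate_toBilin'_J
    rw [Module.finrank_fintype_fun_eq_card, Fintype.card_sum] at this
    lia
  obtain ⟨X, horth, hXL⟩ := exists_transpose_mul_self_eq_one hrank
  refine ⟨X, horth, ?_, hXL⟩
  ext j k
  have hjk : (J l ℝ).toBilin' (X.col j) (X.col k) = 0 := hL.ge (hXL k) _ (hXL j)
  rw [toBilin'_apply'] at hjk
  rw [Matrix.mul_assoc]
  exact hjk

end Symplectic

section NormalForm

variable {l : Type*} [Fintype l] [DecidableEq l] {A : Matrix (l ⊕ l) (l ⊕ l) ℂ}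

open scoped ComplexOrder

lemma isIsotropic_range_J_comp_reMulVecLin (hA : A.IsSymm) (hacc : (A + Aᴴ).PosSemidef)
    (hAJA : A * J l ℂ * A = 0) :
    IsIsotropic (J l ℝ).toBilin' (LinearMap.range ((J l ℝ).mulVecLin ∘ₗ reMulVecLin A)) := by
  have hAJA' : A * (J l ℝ).map ofReal * A = 0 := by
    rw [← hAJA]
    congr 2
    exact map_J l ofRealHom
  rintro _ ⟨w, rfl⟩ _ ⟨z, rfl⟩
  simp only [LinearMap.comp_apply, mulVecLin_apply, toBilin'_apply', J_mulVec_dotProduct_J_mulVec]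
  exact reMulVecLin_dotProduct_mulVec_reMulVecLin hA hacc hAJA' z w

lemma mulVec_ofReal_eq_zero_of_mem_orthogonal (hA : A.IsSymm) {v : l ⊕ l → ℝ}
    (hv : v ∈ (J l ℝ).toBilin'.orthogonal
      (LinearMap.range ((J l ℝ).mulVecLin ∘ₗ reMulVecLin A))) :
    A *ᵥ (ofReal ∘ v) = 0 := by
  refine mulVec_ofReal_eq_zero_of_dotProduct_reMulVecLin hA fun z => ?_
  have hz := hv _ (LinearMap.mem_range_self _ z)
  rwa [LinearMap.comp_apply, mulVecLin_apply, toBilin'_apply', J_mulVec_dotProduct_J_mulVec,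
    dotProduct_comm] at hz

theorem exists_isLagrangian_mulVec_ofReal_eq_zero (hA : A.IsSymm) (hacc : (A + Aᴴ).PosSemidef)
    (hAJA : A * J l ℂ * A = 0) :
    ∃ L, IsLagrangian (J l ℝ).toBilin' L ∧ ∀ v ∈ L, A *ᵥ (ofReal ∘ v) = 0 := by
  obtain ⟨L, hWL, hL⟩ := (isIsotropic_range_J_comp_reMulVecLin hA hacc hAJA).exists_isLagrangian_ge
    isAlt_toBilin'_J
  exact ⟨L, hL, fun v hv => mulVec_ofReal_eq_zero_of_mem_orthogonal hA
    (LinearMap.BilinForm.orthogonal_le hWL (hL.ge hv))⟩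

theorem exists_symplectic_congruence_eq_fromBlocks (hA : A.IsSymm) (hacc : (A + Aᴴ).PosSemidef)
    (hAJA : A * J l ℂ * A = 0) :
    ∃ (T : Matrix (l ⊕ l) (l ⊕ l) ℝ) (D : Matrix l l ℂ), Tᵀ * J l ℝ * T = J l ℝ ∧
      (T.map ofReal)ᵀ * A * T.map ofReal = fromBlocks 0 0 0 D := by
  obtain ⟨L, hL, hAL⟩ := exists_isLagrangian_mulVec_ofReal_eq_zero hA hacc hAJA
  obtain ⟨X, horth, hiso, hXL⟩ := hL.exists_orthonormal_columns
  have hAX : A * X.map ofReal = 0 := by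
    ext i k
    exact congrFun (hAL _ (hXL k)) i
  have hblocks := transpose_fromCols_mul_mul_fromCols hA hAX ((J l ℝ * X).map ofReal)
  rw [← fromCols_map] at hblocks
  exact ⟨_, _, transpose_fromCols_mul_J_mul_fromCols horth hiso, hblocks⟩

end NormalForm

section HamiltonMap

variable {n : ℕ} {A S : Matrix (Idx n) (Idx n) ℂ}

open scoped ComplexOrder

lemma Jmat_eq_neg_J (n : ℕ) : Jmat n = -J (Fin n) ℂ := by
  simp [Jmat, J, fromBlocks_neg]

lemma JmatR_eq_neg_J (n : ℕ) : JmatR n = -J (Fin n) ℝ := by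
  simp [JmatR, J, fromBlocks_neg]

lemma mul_J_mul_self_eq_zero (hS : S = -(A * Jmat n)) (hS2 : S * S = 0) :
    A * J (Fin n) ℂ * A = 0 := by
  have hAJAJ : A * J (Fin n) ℂ * A * J (Fin n) ℂ = 0 := by
    simpa [hS, Jmat_eq_neg_J, Matrix.mul_assoc] using hS2
  calc A * J (Fin n) ℂ * A
      = -(A * J (Fin n) ℂ * A * J (Fin n) ℂ * J (Fin n) ℂ) := by
        rw [Matrix.mul_assoc _ (J _ _) (J _ _), J_squared, Matrix.mul_neg, Matrix.mul_one, neg_neg]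
    _ = 0 := by rw [hAJAJ, Matrix.zero_mul, neg_zero]

lemma sigmaC_mulVec_self (hS : S = -(A * Jmat n)) (z : Idx n → ℂ) :
    sigmaC n z (S *ᵥ z) = (J (Fin n) ℂ *ᵥ z) ⬝ᵥ A *ᵥ (J (Fin n) ℂ *ᵥ z) := by
  rw [sigmaC, hS, Jmat_eq_neg_J, J_mulVec_dotProduct, Matrix.mul_neg, neg_neg, neg_mulVec,
    dotProduct_neg, mulVec_mulVec z A, mulVec_mulVec]

lemma RePosQ.posSemidef_add_conjTranspose (hpos : RePosQ n S) (hA : A.IsSymm)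
    (hS : S = -(A * Jmat n)) : (A + Aᴴ).PosSemidef := by
  refine posSemidef_add_conjTranspose_of_isSymm hA fun u => ?_
  have hu : J (Fin n) ℂ *ᵥ realVec n (-(J (Fin n) ℝ *ᵥ u)) = ofReal ∘ u := by
    rw [← map_J (Fin n) ofRealHom]
    refine (map_ofReal_mulVec _ _).trans ?_
    rw [mulVec_neg, J_mulVec_J_mulVec, neg_neg]
  simpa only [sigmaC_mulVec_self hS, hu] using hpos (-(J (Fin n) ℝ *ᵥ u))

end HamiltonMap

/-- if `S² = 0` and `Re Q_S ≥ 0`, then there are `m ≤ n` and a real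
symplectic change of basis `T ∈ Sp(n,ℝ)` after which the coefficient matrix of `L_S`
is supported in the `Y_1, …, Y_m` block, i.e. `L_S = Σ_{j,k=1}^m b_{jk} Y_j Y_k`. -/
theorem statement18 (n : ℕ) (A : Matrix (Idx n) (Idx n) ℂ) (hA : Aᵀ = A)
    (S : Matrix (Idx n) (Idx n) ℂ) (hS : S = -(A * Jmat n))
    (hS2 : S * S = 0) (hpos : RePosQ n S) :
    ∃ (m : ℕ) (T : Matrix (Idx n) (Idx n) ℝ), m ≤ n ∧
      Tᵀ * JmatR n * T = JmatR n ∧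
      ∀ j k : Idx n, ((T.map Complex.ofReal)ᵀ * A * (T.map Complex.ofReal)) j k ≠ 0 →
        ∃ a b : Fin n, j = Sum.inr a ∧ k = Sum.inr b ∧ (a : ℕ) < m ∧ (b : ℕ) < m := by
  obtain ⟨T, D, hT, hD⟩ := exists_symplectic_congruence_eq_fromBlocks hA
    (hpos.posSemidef_add_conjTranspose hA hS) (mul_J_mul_self_eq_zero hS hS2)
  refine ⟨n, T, le_rfl, by simpa [JmatR_eq_neg_J] using hT, fun j k hjk => ?_⟩
  rw [hD] at hjk
  match j, k with
  | .inl a, .inl b => simp at hjk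
  | .inl a, .inr b => simp at hjk
  | .inr a, .inl b => simp at hjk
  | .inr a, .inr b => exact ⟨a, b, rfl, rfl, a.isLt, b.isLt⟩
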